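/- arXiv:2305.19816 — 3 statements merged into one kernel-verified Lean document; each statement's English description precedes it below -/
import Mathlib

section
/- Let p be an odd prime and let n be an integer with p ≤ n < p^2, n > 4 and (n, p) ≠ (6, 3). Then the alternating group A_n has an irreducible complex character χ whose degree has p-part exactly p, i.e. p divides χ(1) but p^2 does not divide χ(1). -/
open CategoryTheory

theorem simple_of_irr {G V : Type} [Group G] [Finite G] [AddCommGroup V] [Module ℂ V]
    [FiniteDimensional ℂ V] (ρ : Representation ℂ G V) (h : ρ.IsIrreducible) :
    Simple (FDRep.of ρ) := by
  rw [FDRep.simple_iff_end_is_rank_one]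
  have h1 : Module.finrank ℂ (Representation.IntertwiningMap ρ ρ) = 1 :=
    Representation.IsIrreducible.finrank_intertwiningMap_self (ρ := ρ)
  rw [← h1, ← (FDRep.forget₂HomLinearEquiv (FDRep.of ρ) (FDRep.of ρ)).finrank_eq]
  refine LinearEquiv.finrank_eq
    { toFun := fun f => f.hom
      invFun := fun f => Rep.ofHom f
      map_add' := fun _ _ => rfl
      map_smul' := fun _ _ => rfl
      left_inv := fun _ => rfl
      right_inv := fun _ => rfl }

theorem irr_of_functional {G V : Type} [Group G] [Finite G] [AddCommGroup V] [Module ℂ V]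
    (ρ : Representation ℂ G V) (H : Subgroup G) (l : V →ₗ[ℂ] ℂ) [Nontrivial V]
    (h1 : ∀ h ∈ H, ∀ x, l (ρ h x) = l x)
    (h2 : ∀ x, (∀ h ∈ H, ρ h x = x) → l x = 0 → x = 0)
    (h3 : ∀ x, (∀ g, l (ρ g x) = 0) → x = 0)
    (W : Subrepresentation ρ) : W = ⊥ ∨ W = ⊤ := by
  classical
  have key : ∀ W : Subrepresentation ρ, W ≠ ⊥ → ∃ y ∈ W, (∀ h ∈ H, ρ h y = y) ∧ l y ≠ 0 := by
    intro W hW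
    have : ∃ x ∈ W, x ≠ 0 := by
      by_contra! hc
      apply hW
      apply le_antisymm _ bot_le
      intro x hx
      rw [hc x hx]
      exact (⊥ : Subrepresentation ρ).toSubmodule.zero_mem
    obtain ⟨x, hx, hx0⟩ := this
    have : ∃ g, l (ρ g x) ≠ 0 := by
      by_contra! hc
      exact hx0 (h3 x hc)
    obtain ⟨g, hg⟩ := this
    have : Fintype H := Fintype.ofFinite _
    refine ⟨∑ h : H, ρ (h : G) (ρ g x), ?_, ?_, ?_⟩
    · exact W.toSubmodule.sum_mem fun h _ => W.apply_mem_toSubmodule _ (W.apply_mem_toSubmodule _ hx)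
    · intro h hh
      rw [map_sum]
      rw [← Equiv.sum_comp (Equiv.mulLeft (⟨h, hh⟩ : H)) (fun k : H => ρ k (ρ g x))]
      simp
    · rw [map_sum, Finset.sum_congr rfl (fun (h : H) _ => h1 h h.2 _)]
      simp [hg]
  by_contra! hc
  obtain ⟨W', hW'⟩ := exists_isCompl W
  have hW'0 : W' ≠ ⊥ := by
    rintro rfl
    exact hc.2 (by simpa using hW'.sup_eq_top)
  obtain ⟨y, hy, hyH, hyl⟩ := key W hc.1
  obtain ⟨z, hz, hzH, hzl⟩ := key W' hW'0
  have : l z • y - l y • z = 0 := by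
    apply h2
    · intro h hh
      simp [hyH h hh, hzH h hh]
    · simp [mul_comm]
  have hyW' : y ∈ W' := by
    have h4 : y = (l z)⁻¹ • l y • z := by
      rw [← sub_eq_zero.mp this, smul_smul, inv_mul_cancel₀ hzl, one_smul]
    rw [h4]
    exact W'.toSubmodule.smul_mem _ (W'.toSubmodule.smul_mem _ hz)
  have : y ∈ W ⊓ W' := ⟨hy, hyW'⟩
  rw [hW'.inf_eq_bot] at this
  have : y = 0 := this
  simp [this] at hyl

theorem clifford {n : ℕ} (hn : 2 ≤ n) {V : Type} [AddCommGroup V] [Module ℂ V]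
    [FiniteDimensional ℂ V] [Nontrivial V] (ρ : Representation ℂ (Equiv.Perm (Fin n)) V)
    (hirr : ∀ W : Subrepresentation ρ, W = ⊥ ∨ W = ⊤) :
    ∃ U : FDRep ℂ (alternatingGroup (Fin n)), Simple U ∧
      (Module.finrank ℂ U = Module.finrank ℂ V ∨ 2 * Module.finrank ℂ U = Module.finrank ℂ V) := by
  classical
  let σ : Representation ℂ (alternatingGroup (Fin n)) V := ρ.comp (alternatingGroup (Fin n)).subtype
  have hσ : ∀ g x, σ g x = ρ g x := fun _ _ => rfl
  -- minimal nonzero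
  obtain ⟨U, hU, hmin⟩ : ∃ U : Subrepresentation σ, U ≠ ⊥ ∧
      ∀ U' : Subrepresentation σ, U' ≠ ⊥ → Module.finrank ℂ U.toSubmodule ≤ Module.finrank ℂ U'.toSubmodule := by
    have hne : ({U : Subrepresentation σ | U ≠ ⊥}).Nonempty := by
      refine ⟨⊤, fun h => ?_⟩
      have := congrArg Subrepresentation.toSubmodule h
      exact (top_ne_bot : (⊤ : Submodule ℂ V) ≠ ⊥) this
    obtain ⟨U, hU, hm⟩ := exists_minimalFor_of_wellFoundedLT (fun U : Subrepresentation σ => U ≠ ⊥)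
      (fun U => Module.finrank ℂ U.toSubmodule) hne
    refine ⟨U, hU, fun U' hU' => ?_⟩
    by_contra! hlt
    exact absurd (hm hU' hlt.le) (not_le.mpr hlt)
  have hbot : ∀ U : Subrepresentation σ, U ≠ ⊥ ↔ U.toSubmodule ≠ ⊥ := by
    intro U
    rw [ne_eq, ne_eq, ← Subrepresentation.toSubmodule_injective.eq_iff]; rfl
  have hUirr : U.toRepresentation.IsIrreducible := by
    refine { exists_pair_ne := ⟨⊥, ⊤, ?_⟩, eq_bot_or_eq_top := ?_ }
    · intro h
      have h' : (⊥ : Submodule ℂ U.toSubmodule) = ⊤ := congrArg Subrepresentation.toSubmodule h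
      apply (hbot U).1 hU
      rw [← Submodule.map_subtype_top U.toSubmodule, ← h', Submodule.map_bot]
    · intro W
      by_cases hW : W.toSubmodule = ⊥
      · left
        apply Subrepresentation.toSubmodule_injective
        exact hW
      right
      let W' : Subrepresentation σ :=
        ⟨W.toSubmodule.map U.toSubmodule.subtype, by
          rintro g _ ⟨x, hx, rfl⟩
          exact ⟨_, W.apply_mem_toSubmodule g hx, rfl⟩⟩
      have hW' : W' ≠ ⊥ := by
        rw [hbot]
        intro h
        apply hW
        apply Submodule.map_injective_of_injective U.toSubmodule.injective_subtype
        rw [Submodule.map_bot]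
        exact h
      have := hmin W' hW'
      apply Subrepresentation.toSubmodule_injective
      change _ = (⊤ : Submodule ℂ U.toSubmodule)
      apply Submodule.eq_top_of_finrank_eq
      apply le_antisymm (Submodule.finrank_le _)
      have e : Module.finrank ℂ W'.toSubmodule = Module.finrank ℂ W.toSubmodule :=
        Submodule.finrank_map_subtype_eq _ _
      omega
  refine ⟨FDRep.of U.toRepresentation, simple_of_irr _ hUirr, ?_⟩
  change Module.finrank ℂ U.toSubmodule = _ ∨ 2 * Module.finrank ℂ U.toSubmodule = _
  let a : Fin n := ⟨0, by omega⟩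
  let b : Fin n := ⟨1, by omega⟩
  have hab : a ≠ b := by simp [a, b, Fin.ext_iff]
  let t : Equiv.Perm (Fin n) := Equiv.swap a b
  have htt : t * t = 1 := Equiv.swap_mul_self _ _
  have ht : Equiv.Perm.sign t = -1 := Equiv.Perm.sign_swap hab
  let P : Submodule ℂ V := U.toSubmodule
  let Q : Submodule ℂ V := P.map (ρ t)
  have hρtt : ∀ x, ρ t (ρ t x) = x := by
    intro x
    rw [← Module.End.mul_apply, ← map_mul, htt, map_one, Module.End.one_apply]
  have hP : ∀ g, Equiv.Perm.sign g = 1 → ∀ x ∈ P, ρ g x ∈ P := by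
    intro g hg x hx
    exact U.apply_mem_toSubmodule (⟨g, Equiv.Perm.mem_alternatingGroup.2 hg⟩ : alternatingGroup (Fin n)) hx
  have hmul : ∀ g h x, ρ g (ρ h x) = ρ (g * h) x := by intro g h x; rw [map_mul]; rfl
  have hQ : ∀ g, Equiv.Perm.sign g = 1 → ∀ x ∈ Q, ρ g x ∈ Q := by
    rintro g hg _ ⟨x, hx, rfl⟩
    refine ⟨ρ (t * g * t) x, hP _ (by simp [ht, hg]) x hx, ?_⟩
    rw [hmul, hmul]
    congr 2
    rw [← mul_assoc, ← mul_assoc, htt, one_mul]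
  have hPQ : ∀ g, Equiv.Perm.sign g = -1 → ∀ x ∈ P, ρ g x ∈ Q := by
    intro g hg x hx
    refine ⟨ρ (t * g) x, hP _ (by simp [ht, hg]) x hx, ?_⟩
    rw [hmul, ← mul_assoc, htt, one_mul]
  have hQP : ∀ g, Equiv.Perm.sign g = -1 → ∀ x ∈ Q, ρ g x ∈ P := by
    rintro g hg _ ⟨x, hx, rfl⟩
    rw [hmul]
    exact hP _ (by simp [ht, hg]) x hx
  let S : Subrepresentation ρ := ⟨P ⊔ Q, by
    intro g v hv
    obtain ⟨x, hx, y, hy, rfl⟩ := Submodule.mem_sup.1 hv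
    rw [map_add]
    rcases Int.units_eq_one_or (Equiv.Perm.sign g) with hg | hg
    · exact Submodule.add_mem_sup (hP g hg x hx) (hQ g hg y hy)
    · rw [add_comm]
      exact Submodule.add_mem_sup (hQP g hg y hy) (hPQ g hg x hx)⟩
  let I : Subrepresentation ρ := ⟨P ⊓ Q, by
    intro g v hv
    rcases Int.units_eq_one_or (Equiv.Perm.sign g) with hg | hg
    · exact ⟨hP g hg v hv.1, hQ g hg v hv.2⟩
    · exact ⟨hQP g hg v hv.2, hPQ g hg v hv.1⟩⟩
  have hP0 : P ≠ ⊥ := (hbot U).1 hU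
  have hS : P ⊔ Q = ⊤ := by
    rcases hirr S with h | h
    · exfalso
      apply hP0
      have h' : P ⊔ Q = ⊥ := congrArg Subrepresentation.toSubmodule h
      exact (sup_eq_bot_iff.1 h').1
    · exact congrArg Subrepresentation.toSubmodule h
  have hfQ : Module.finrank ℂ Q = Module.finrank ℂ P := by
    have hinj : Function.Injective (ρ t) := by
      intro x y hxy
      rw [← hρtt x, ← hρtt y, hxy]
    exact (Submodule.equivMapOfInjective (ρ t) hinj P).finrank_eq.symm
  rcases hirr I with h | h
  · right
    have h' : P ⊓ Q = ⊥ := congrArg Subrepresentation.toSubmodule h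
    have := Submodule.finrank_sup_add_finrank_inf_eq P Q
    rw [hS, h', hfQ, finrank_top, finrank_bot] at this
    change 2 * Module.finrank ℂ P = _
    omega
  · left
    have h' : P ⊓ Q = ⊤ := congrArg Subrepresentation.toSubmodule h
    have : P = ⊤ := (inf_eq_top_iff.1 h').1
    change Module.finrank ℂ P = _
    rw [this, finrank_top]

theorem sum_two_val {α : Type} [Fintype α] (φ : α → ℂ) (v : ℂ) (t0 : α) (h0 : φ t0 = v)
    (h : ∀ t, φ t = 0 ∨ φ t = v) (hs : ∑ t, φ t = 0) : v = 0 := by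
  classical
  by_contra hv
  have : ∑ t, φ t = ∑ t, if φ t = v then v else 0 := by
    refine Finset.sum_congr rfl fun t _ => ?_
    rcases h t with h | h
    · rw [h, if_neg (Ne.symm hv)]
    · rw [h, if_pos rfl]
  rw [this, ← Finset.sum_filter, Finset.sum_const, smul_eq_zero] at hs
  rcases hs with hs | hs
  · rw [Finset.card_eq_zero] at hs
    have : t0 ∈ Finset.univ.filter (fun t => φ t = v) := by simp [h0]
    rw [hs] at this
    simp at this
  · exact hv hs

theorem exists_perm {k n : ℕ} (c s : Fin k → Fin n) (hc : Function.Injective c)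
    (hs : Function.Injective s) : ∃ g : Equiv.Perm (Fin n), ∀ i, g (c i) = s i := by
  classical
  let eq : {x // x ∈ Set.range c} ≃ {x // x ∈ Set.range s} :=
    (Equiv.ofInjective c hc).symm.trans (Equiv.ofInjective s hs)
  refine ⟨eq.extendSubtype, fun i => ?_⟩
  rw [Equiv.extendSubtype_apply_of_mem eq (c i) ⟨i, rfl⟩]
  have : (⟨c i, ⟨i, rfl⟩⟩ : Set.range c) = Equiv.ofInjective c hc i := rfl
  simp only [eq, Equiv.trans_apply]
  rw [this, Equiv.symm_apply_apply]
  rfl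

abbrev oneS (n : ℕ) : Submodule ℂ (Fin n → ℂ) := Submodule.span ℂ {fun _ => (1 : ℂ)}

abbrev QQ (n : ℕ) : Type := (Fin n → ℂ) ⧸ oneS n

noncomputable def qe (n : ℕ) (i : Fin n) : QQ n := (oneS n).mkQ (Pi.single i 1)

noncomputable def qA (n : ℕ) (g : Equiv.Perm (Fin n)) : QQ n →ₗ[ℂ] QQ n :=
  Submodule.mapQ (oneS n) (oneS n) (LinearMap.funLeft ℂ ℂ g) (by
    rw [Submodule.span_le]
    rintro _ rfl
    exact Submodule.subset_span rfl)

theorem qA_one (n : ℕ) : qA n 1 = LinearMap.id := by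
  apply Submodule.linearMap_qext
  rfl

theorem qA_mul (n : ℕ) (g h : Equiv.Perm (Fin n)) : qA n (g * h) = qA n h ∘ₗ qA n g := by
  apply Submodule.linearMap_qext
  rfl

theorem qA_qe (n : ℕ) (g : Equiv.Perm (Fin n)) (i : Fin n) : qA n g (qe n i) = qe n (g⁻¹ i) := by
  change (oneS n).mkQ _ = (oneS n).mkQ _
  congr 1
  ext j
  simp only [LinearMap.funLeft_apply, Pi.single_apply, Equiv.Perm.eq_inv_iff_eq]

theorem sum_qe (n : ℕ) : ∑ t, qe n t = 0 := by
  unfold qe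
  rw [← map_sum]
  rw [Submodule.mkQ_apply, Submodule.Quotient.mk_eq_zero]
  apply Submodule.subset_span
  rw [Set.mem_singleton_iff]
  ext j
  simp [Finset.sum_apply, Pi.single_apply]

theorem q_ext {n k : ℕ} (f : QQ n [⋀^Fin k]→ₗ[ℂ] ℂ)
    (h : ∀ s : Fin k → Fin n, Function.Injective s → f (fun i => qe n (s i)) = 0) : f = 0 := by
  apply AlternatingMap.compLinearMap_injective (oneS n).mkQ (Submodule.mkQ_surjective _)
  apply Module.Basis.ext_alternating (Pi.basisFun ℂ (Fin n))
  intro v hv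
  simpa [qe] using h v hv

noncomputable def qρ (n k : ℕ) : Representation ℂ (Equiv.Perm (Fin n)) (QQ n [⋀^Fin k]→ₗ[ℂ] ℂ) where
  toFun g :=
    { toFun := fun f => f.compLinearMap (qA n g)
      map_add' := fun _ _ => rfl
      map_smul' := fun _ _ => rfl }
  map_one' := by
    ext f v
    simp [qA_one]
  map_mul' g h := by
    ext f v
    simp only [qA_mul]
    rfl

theorem qρ_qe (n k : ℕ) (g : Equiv.Perm (Fin n)) (f : QQ n [⋀^Fin k]→ₗ[ℂ] ℂ) (s : Fin k → Fin n) :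
    qρ n k g f (fun i => qe n (s i)) = f (fun i => qe n (g⁻¹ (s i))) := by
  change f (fun i => qA n g (qe n (s i))) = _
  simp only [qA_qe]

theorem finrank_QQ (n : ℕ) (hn : 0 < n) : Module.finrank ℂ (QQ n) = n - 1 := by
  rw [Submodule.finrank_quotient, finrank_span_singleton]
  · simp
  · intro h
    have := congrFun h ⟨0, hn⟩
    simp at this

instance (n k : ℕ) : FiniteDimensional ℂ (QQ n [⋀^Fin k]→ₗ[ℂ] ℂ) :=
  Module.Finite.equiv (exteriorPower.alternatingMapLinearEquiv (R := ℂ) (M := QQ n) (N := ℂ) (n := k)).symm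

theorem finrank_alt (n k : ℕ) (hn : 0 < n) :
    Module.finrank ℂ (QQ n [⋀^Fin k]→ₗ[ℂ] ℂ) = (n - 1).choose k := by
  rw [(exteriorPower.alternatingMapLinearEquiv (R := ℂ) (M := QQ n) (N := ℂ) (n := k)).finrank_eq]
  rw [← finrank_QQ n hn, ← exteriorPower.finrank_eq (R := ℂ) (M := QQ n) (n := k)]
  exact Subspace.dual_finrank_eq

theorem qρ_h2 {n k : ℕ} (c : Fin k → Fin n)
    (f : QQ n [⋀^Fin k]→ₗ[ℂ] ℂ)
    (hf : ∀ h ∈ fixingSubgroup (Equiv.Perm (Fin n)) (Set.range c), qρ n k h f = f)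
    (hl : f (fun i => qe n (c i)) = 0) : f = 0 := by
  classical
  have p0 : ∀ s : Fin k → Fin n, (∀ j, s j ∈ Set.range c) → f (fun i => qe n (s i)) = 0 := by
    intro s hs
    choose τ hτ using hs
    have e : (fun i => qe n (s i)) = (fun i => qe n (c i)) ∘ τ := by
      ext i; simp [hτ]
    rw [e]
    by_cases hi : Function.Injective τ
    · have := f.map_perm (fun i => qe n (c i)) (Equiv.ofBijective τ (Finite.injective_iff_bijective.1 hi))
      rw [hl, smul_zero] at this
      exact this
    · apply f.map_eq_zero_of_not_injective
      intro h
      exact hi h.of_comp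
  have inv : ∀ a b, a ∉ Set.range c → b ∉ Set.range c → ∀ s : Fin k → Fin n,
      f (fun i => qe n (Equiv.swap a b (s i))) = f (fun i => qe n (s i)) := by
    intro a b ha hb s
    have hm : Equiv.swap a b ∈ fixingSubgroup (Equiv.Perm (Fin n)) (Set.range c) := by
      rw [mem_fixingSubgroup_iff]
      intro y hy
      rw [Equiv.Perm.smul_def]
      apply Equiv.swap_apply_of_ne_of_ne
      · rintro rfl; exact ha hy
      · rintro rfl; exact hb hy
    have := qρ_qe n k (Equiv.swap a b) f s
    rw [hf _ hm, Equiv.swap_inv] at this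
    exact this.symm
  apply q_ext
  intro s hs
  by_cases hall : ∀ j, s j ∈ Set.range c
  · exact p0 s hall
  push Not at hall
  obtain ⟨i, hi⟩ := hall
  by_cases hj : ∃ j, j ≠ i ∧ s j ∉ Set.range c
  · obtain ⟨j, hji, hj⟩ := hj
    have h1 := inv (s i) (s j) hi hj s
    have h2 := f.map_swap (fun i => qe n (s i)) (Ne.symm hji)
    have e : (fun i => qe n (s i)) ∘ (Equiv.swap i j) = fun l => qe n (Equiv.swap (s i) (s j) (s l)) := by
      ext l
      simp only [Function.comp_apply]
      rw [hs.swap_apply]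
    rw [e, h1] at h2
    exact self_eq_neg.1 h2
  · push Not at hj
    refine sum_two_val (fun t => f (Function.update (fun i => qe n (s i)) i (qe n t))) _ (s i) ?_ ?_ ?_
    · congr 1
      exact Function.update_eq_self i (fun i => qe n (s i))
    · intro t
      have e : Function.update (fun i => qe n (s i)) i (qe n t) = fun l => qe n (Function.update s i t l) := by
        ext l
        by_cases hl : l = i
        · subst hl; simp
        · simp [hl]
      simp only [e]
      by_cases ht : t ∈ Set.range c
      · left
        apply p0
        intro j
        by_cases hji : j = i
        · subst hji; simpa using ht
        · simpa [hji] using hj j hji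
      · right
        rw [← inv (s i) t hi ht s]
        congr 1
        ext l
        by_cases hl : l = i
        · subst hl; simp
        · rw [Function.update_of_ne hl, Equiv.swap_apply_of_ne_of_ne]
          · exact fun h => hl (hs h)
          · intro h
            exact ht (h ▸ hj l hl)
    · rw [← AlternatingMap.map_update_sum, sum_qe]
      exact f.map_update_zero _ _

def bR (n : ℕ) : Representation ℂ (Equiv.Perm (Fin n)) (Sym2 (Fin n) → ℂ) where
  toFun g := LinearMap.funLeft ℂ ℂ (Sym2.map (g⁻¹ : Equiv.Perm (Fin n)))
  map_one' := by
    ext f v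
    simp [LinearMap.funLeft_apply]
  map_mul' g h := by
    refine LinearMap.ext fun f => funext fun v => ?_
    induction v with | _ x y
    simp [LinearMap.funLeft_apply]

theorem bR_apply (n : ℕ) (g : Equiv.Perm (Fin n)) (F : Sym2 (Fin n) → ℂ) (i j : Fin n) :
    bR n g F s(i, j) = F s(g⁻¹ i, g⁻¹ j) := rfl

def bL (n : ℕ) : (Sym2 (Fin n) → ℂ) →ₗ[ℂ] (Fin n → ℂ) × (Fin n → ℂ) where
  toFun F := (fun i => F s(i, i), fun i => ∑ j, F s(i, j))
  map_add' F G := by ext <;> simp [Finset.sum_add_distrib]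
  map_smul' a F := by ext <;> simp [Finset.mul_sum]

theorem bL_surj (n : ℕ) (hn : 3 ≤ n) : Function.Surjective (bL n) := by
  classical
  rintro ⟨d, r⟩
  have h1 : (n : ℂ) - 2 ≠ 0 := by
    rw [sub_ne_zero]; norm_cast; omega
  have h2 : 2 * (n : ℂ) - 2 ≠ 0 := by
    rw [sub_ne_zero]; norm_cast; omega
  let S : ℂ := (∑ i, (r i - d i)) / (2 * n - 2)
  let x : Fin n → ℂ := fun i => (r i - d i - S) / (n - 2)
  have hx : ∑ i, x i = S := by
    simp only [x]
    rw [← Finset.sum_div, Finset.sum_sub_distrib]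
    have : ∑ i, (r i - d i) = S * (2 * n - 2) := (div_mul_cancel₀ _ h2).symm
    rw [this]
    simp
    field_simp
    ring
  let F : Sym2 (Fin n) → ℂ := Sym2.lift ⟨fun i j => if i = j then d i else x i + x j, by
    intro i j
    by_cases h : i = j
    · subst h; rfl
    · simp [h, Ne.symm h, add_comm]⟩
  refine ⟨F, ?_⟩
  ext i
  · simp [bL, F]
  · simp only [bL, F, LinearMap.coe_mk, AddHom.coe_mk, Sym2.lift_mk]
    have : ∀ j, (if i = j then d i else x i + x j) = (x i + x j) + if i = j then d i - 2 * x i else 0 := by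
      intro j
      by_cases h : i = j
      · subst h; simp; ring
      · simp [h]
    simp only [this, Finset.sum_add_distrib, hx]
    simp [x]
    field_simp
    ring

theorem finrank_bL (n : ℕ) (hn : 3 ≤ n) :
    2 * Module.finrank ℂ (bL n).ker = n * (n - 3) := by
  have := (bL n).finrank_range_add_finrank_ker
  rw [LinearMap.range_eq_top.2 (bL_surj n hn), finrank_top] at this
  simp only [Module.finrank_prod, Module.finrank_fintype_fun_eq_card, Fintype.card_fin, Sym2.card] at this
  have h2 : 2 * (n + 1).choose 2 = (n + 1) * n := by
    have := Nat.triangle_succ n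
    rw [Nat.choose_two_right]
    exact Nat.mul_div_cancel' (even_iff_two_dvd.1 (by rw [mul_comm]; exact Nat.even_mul_succ_self n))
  obtain ⟨m, rfl⟩ := Nat.exists_eq_add_of_le hn
  simp only [Nat.add_sub_cancel_left]
  nlinarith

def bW (n : ℕ) : Subrepresentation (bR n) where
  toSubmodule := (bL n).ker
  apply_mem_toSubmodule g F hF := by
    rw [LinearMap.mem_ker] at hF ⊢
    have h1 : ∀ i, F s(i, i) = 0 := fun i => congrFun (congrArg Prod.fst hF) i
    have h2 : ∀ i, ∑ j, F s(i, j) = 0 := fun i => congrFun (congrArg Prod.snd hF) i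
    ext i
    · exact h1 _
    · change ∑ j, F s(g⁻¹ i, g⁻¹ j) = 0
      rw [Equiv.sum_comp g⁻¹ (fun j => F s(g⁻¹ i, j))]
      exact h2 _

theorem bR_h2 {n : ℕ} (a b : Fin n) (hab : a ≠ b) (F : Sym2 (Fin n) → ℂ) (h1 : ∀ i, F s(i, i) = 0)
    (h2 : ∀ i, ∑ j, F s(i, j) = 0)
    (hf : ∀ h ∈ fixingSubgroup (Equiv.Perm (Fin n)) ({a, b} : Set (Fin n)), bR n h F = F)
    (hl : F s(a, b) = 0) : F = 0 := by
  classical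
  have inv : ∀ x y, x ≠ a → x ≠ b → y ≠ a → y ≠ b → ∀ i j,
      F s(Equiv.swap x y i, Equiv.swap x y j) = F s(i, j) := by
    intro x y hxa hxb hya hyb i j
    have hm : Equiv.swap x y ∈ fixingSubgroup (Equiv.Perm (Fin n)) ({a, b} : Set (Fin n)) := by
      rw [mem_fixingSubgroup_iff]
      rintro z (rfl | rfl)
      · exact Equiv.swap_apply_of_ne_of_ne hxa.symm hya.symm
      · exact Equiv.swap_apply_of_ne_of_ne hxb.symm hyb.symm
    have := bR_apply n (Equiv.swap x y) F i j
    rw [hf _ hm, Equiv.swap_inv] at this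
    exact this.symm
  have ha : ∀ r, F s(a, r) = 0 := by
    intro r
    by_cases hra : r = a
    · rw [hra]; exact h1 a
    by_cases hrb : r = b
    · rw [hrb]; exact hl
    refine sum_two_val (fun t => F s(a, t)) _ r rfl ?_ (h2 a)
    intro t
    by_cases hta : t = a
    · left; rw [hta]; exact h1 a
    by_cases htb : t = b
    · left; rw [htb]; exact hl
    right
    have := inv r t hra hrb hta htb a r
    rwa [Equiv.swap_apply_left, Equiv.swap_apply_of_ne_of_ne (Ne.symm hra) (Ne.symm hta)] at this
  have hb : ∀ r, F s(b, r) = 0 := by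
    intro r
    by_cases hra : r = a
    · rw [hra, Sym2.eq_swap]; exact hl
    by_cases hrb : r = b
    · rw [hrb]; exact h1 b
    refine sum_two_val (fun t => F s(b, t)) _ r rfl ?_ (h2 b)
    intro t
    by_cases hta : t = a
    · left; rw [hta, Sym2.eq_swap]; exact hl
    by_cases htb : t = b
    · left; rw [htb]; exact h1 b
    right
    have := inv r t hra hrb hta htb b r
    rwa [Equiv.swap_apply_left, Equiv.swap_apply_of_ne_of_ne (Ne.symm hrb) (Ne.symm htb)] at this
  funext z
  induction z with | _ q r
  change F s(q, r) = 0
  by_cases hqa : q = a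
  · rw [hqa]; exact ha r
  by_cases hqb : q = b
  · rw [hqb]; exact hb r
  by_cases hra : r = a
  · rw [hra, Sym2.eq_swap]; exact ha q
  by_cases hrb : r = b
  · rw [hrb, Sym2.eq_swap]; exact hb q
  by_cases hqr : q = r
  · rw [hqr]; exact h1 r
  refine sum_two_val (fun t => F s(q, t)) _ r rfl ?_ (h2 q)
  intro t
  by_cases hta : t = a
  · left; rw [hta, Sym2.eq_swap]; exact ha q
  by_cases htb : t = b
  · left; rw [htb, Sym2.eq_swap]; exact hb q
  by_cases htq : t = q
  · left; rw [htq]; exact h1 q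
  right
  have := inv r t hra hrb hta htb q r
  rwa [Equiv.swap_apply_left, Equiv.swap_apply_of_ne_of_ne hqr (Ne.symm htq)] at this

theorem not_dvd_desc {p a : ℕ} (hp : p.Prime) : ∀ r j : ℕ, r < p → j ≤ r →
    ¬ p ∣ (a * p + r).descFactorial j := by
  intro r j hr
  induction j with
  | zero => intro _ h; exact hp.one_lt.ne' (Nat.dvd_one.1 (by simpa using h))
  | succ j ih =>
    intro hj h
    rw [Nat.descFactorial_succ] at h
    rcases hp.dvd_mul.1 h with h | h
    · rw [Nat.add_sub_assoc (by omega), Nat.dvd_add_right (Dvd.intro_left a rfl)] at h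
      have := Nat.le_of_dvd (by omega) h
      omega
    · exact ih (by omega) h

theorem arith_A {p a b : ℕ} (hp : p.Prime) (ha : 0 < a) (hap : a < p) (hbp : b + 1 < p) :
    p ∣ (a * p + b).choose (b + 1) ∧ ¬ p ^ 2 ∣ (a * p + b).choose (b + 1) := by
  have h1 : (b + 1).factorial * (a * p + b).choose (b + 1) = a * p * (a * p + b).descFactorial b := by
    rw [← Nat.descFactorial_eq_factorial_mul_choose, Nat.descFactorial_succ, Nat.add_sub_cancel]
  have h2 := not_dvd_desc (a := a) hp b b (by omega) le_rfl
  have h3 : ¬ p ∣ (b + 1).factorial := by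
    rw [hp.dvd_factorial]; omega
  refine ⟨?_, fun h => ?_⟩
  · have : p ∣ (b + 1).factorial * (a * p + b).choose (b + 1) := by
      rw [h1, mul_assoc, mul_left_comm]
      exact Dvd.intro _ rfl
    exact (hp.dvd_mul.1 this).resolve_left h3
  · have h4 : p * p ∣ p * (a * (a * p + b).descFactorial b) := by
      have := Dvd.dvd.mul_left h (b + 1).factorial
      rw [h1, pow_two] at this
      rwa [mul_comm a p, mul_assoc, mul_comm p a] at this
    have h5 := Nat.dvd_of_mul_dvd_mul_left hp.pos h4
    rcases hp.dvd_mul.1 h5 with h | h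
    · have := Nat.le_of_dvd ha h
      omega
    · exact h2 h

theorem arith_B {p a d : ℕ} (hp : p.Prime) (hodd : Odd p) (h3 : p ≠ 3) (ha : 0 < a) (hap : a < p)
    (hn : 3 ≤ a * p) (hd : 2 * d = a * p * (a * p - 3)) : p ∣ d ∧ ¬ p ^ 2 ∣ d := by
  have h2 : ¬ p ∣ 2 := by
    intro h
    have := (Nat.prime_dvd_prime_iff_eq hp Nat.prime_two).1 h
    subst this
    exact absurd hodd (by decide)
  refine ⟨?_, fun h => ?_⟩
  · have : p ∣ 2 * d := by
      rw [hd, mul_assoc, mul_left_comm]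
      exact Dvd.intro _ rfl
    exact (hp.dvd_mul.1 this).resolve_left h2
  · have h4 : p * p ∣ p * (a * (a * p - 3)) := by
      have := Dvd.dvd.mul_left h 2
      rw [hd, pow_two] at this
      rwa [mul_comm a p, mul_assoc, mul_comm p a] at this
    have h5 := Nat.dvd_of_mul_dvd_mul_left hp.pos h4
    rcases hp.dvd_mul.1 h5 with h | h
    · have := Nat.le_of_dvd ha h
      omega
    · have h6 : p ∣ 3 := by
        have := (Nat.dvd_sub_iff_right hn (Dvd.intro_left a rfl)).1 h
        exact this
      exact h3 ((Nat.prime_dvd_prime_iff_eq hp Nat.prime_three).1 h6)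

theorem finish {p n : ℕ} (hp : p.Prime) (hodd : Odd p) (hn : 2 ≤ n)
    {V : Type} [AddCommGroup V] [Module ℂ V]
    [FiniteDimensional ℂ V] (ρ : Representation ℂ (Equiv.Perm (Fin n)) V)
    (h1 : p ∣ Module.finrank ℂ V) (h2 : ¬ p ^ 2 ∣ Module.finrank ℂ V)
    (hirr : Nontrivial V → ∀ W : Subrepresentation ρ, W = ⊥ ∨ W = ⊤) :
    ∃ V : FDRep ℂ ↥(alternatingGroup (Fin n)), Simple V ∧
      p ∣ Module.finrank ℂ V ∧ ¬ (p ^ 2 ∣ Module.finrank ℂ V) := by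
  have : Nontrivial V := by
    apply Module.nontrivial_of_finrank_pos (R := ℂ)
    apply Nat.pos_of_ne_zero
    intro h
    rw [h] at h2
    exact h2 (dvd_zero _)
  obtain ⟨U, hU, hd⟩ := clifford hn ρ (hirr this)
  refine ⟨U, hU, ?_⟩
  rcases hd with hd | hd
  · rw [hd]; exact ⟨h1, h2⟩
  · rw [← hd] at h1 h2
    refine ⟨(hp.dvd_mul.1 h1).resolve_left ?_, fun h => h2 (Dvd.dvd.mul_left h 2)⟩
    intro h
    have := (Nat.prime_dvd_prime_iff_eq hp Nat.prime_two).1 h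
    subst this
    exact absurd hodd (by decide)


/-- Lemma 4.2 of the paper. Let `p` be an odd prime and `p ≤ n < p²`, `n > 4`,
`(n, p) ≠ (6, 3)`. Then the alternating group `A_n` has an irreducible complex
character whose degree has `p`-part exactly `p`, i.e. the degree is divisible by `p`
but not by `p²`. -/
theorem alternating_char_p_part (p n : ℕ) (hp : p.Prime) (hodd : Odd p)
    (hpn : p ≤ n) (hnp2 : n < p ^ 2) (hn4 : 4 < n) (hexc : ¬(n = 6 ∧ p = 3)) :
    ∃ V : FDRep ℂ ↥(alternatingGroup (Fin n)), Simple V ∧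
      p ∣ Module.finrank ℂ V ∧ ¬ (p ^ 2 ∣ Module.finrank ℂ V) := by
  have hp2 := hp.two_le
  have hp0 := hp.pos
  obtain ⟨a, b, hb, rfl⟩ : ∃ a b, b < p ∧ n = a * p + b :=
    ⟨n / p, n % p, Nat.mod_lt _ hp0, by rw [mul_comm]; exact (Nat.div_add_mod n p).symm⟩
  have ha : 0 < a := by
    rcases Nat.eq_zero_or_pos a with rfl | h
    · omega
    · exact h
  have hap : a < p := by
    by_contra! h
    nlinarith
  rcases b with _ | b
  · -- two-row character
    have h3 : p ≠ 3 := by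
      rintro rfl
      interval_cases a <;> omega
    have hd := finrank_bL (a * p + 0) (by omega)
    simp only [Nat.add_zero] at *
    have ⟨k1, k2⟩ := arith_B hp hodd h3 ha hap (by omega) hd
    refine finish hp hodd (by omega) (bW (a * p)).toRepresentation k1 k2 ?_
    intro _
    let c : Fin 2 → Fin (a * p) := ![⟨0, by omega⟩, ⟨1, by omega⟩]
    have hab : c 0 ≠ c 1 := by simp [c]
    have hc : Function.Injective c := by
      intro i j hij
      fin_cases i <;> fin_cases j <;> simp_all
    refine irr_of_functional _ (fixingSubgroup (Equiv.Perm (Fin (a * p))) ({c 0, c 1} : Set (Fin (a * p))))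
      ((LinearMap.proj s(c 0, c 1)) ∘ₗ (bW (a * p)).toSubmodule.subtype) ?_ ?_ ?_
    · rintro h hh ⟨F, hF⟩
      have hh' := inv_mem hh
      rw [mem_fixingSubgroup_iff] at hh'
      change F s(h⁻¹ (c 0), h⁻¹ (c 1)) = F s(c 0, c 1)
      have e0 : h⁻¹ (c 0) = c 0 := hh' _ (by simp)
      have e1 : h⁻¹ (c 1) = c 1 := hh' _ (by simp)
      rw [e0, e1]
    · rintro ⟨F, hF⟩ hH hl
      have hF' : bL (a * p) F = 0 := hF
      apply Subtype.ext
      refine bR_h2 (c 0) (c 1) hab F (fun i => congrFun (congrArg Prod.fst hF') i)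
        (fun i => congrFun (congrArg Prod.snd hF') i) ?_ hl
      intro h hh
      exact congrArg Subtype.val (hH h hh)
    · rintro ⟨F, hF⟩ hg
      have hF' : bL (a * p) F = 0 := hF
      apply Subtype.ext
      funext z
      induction z with | _ q r
      change F s(q, r) = 0
      by_cases hqr : q = r
      · subst hqr
        exact congrFun (congrArg Prod.fst hF') q
      obtain ⟨g, hgc⟩ := exists_perm c ![q, r] hc (by
        intro i j hij
        fin_cases i <;> fin_cases j <;> simp_all)
      have h0 := hg g⁻¹
      change F s((g⁻¹)⁻¹ (c 0), (g⁻¹)⁻¹ (c 1)) = 0 at h0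
      rw [inv_inv, hgc, hgc] at h0
      exact h0
  · -- hook character
    have ⟨k1, k2⟩ := arith_A hp ha hap hb
    have hd := finrank_alt (a * p + (b + 1)) (b + 1) (by omega)
    have e : a * p + (b + 1) - 1 = a * p + b := by omega
    rw [e] at hd
    rw [← hd] at k1 k2
    refine finish hp hodd (by omega) (qρ (a * p + (b + 1)) (b + 1)) k1 k2 ?_
    intro _
    let c : Fin (b + 1) → Fin (a * p + (b + 1)) := Fin.castLE (by omega)
    have hc : Function.Injective c := Fin.castLE_injective _
    refine irr_of_functional _ (fixingSubgroup (Equiv.Perm (Fin (a * p + (b + 1)))) (Set.range c))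
      { toFun := fun f => f (fun i => qe _ (c i))
        map_add' := fun _ _ => rfl
        map_smul' := fun _ _ => rfl } ?_ ?_ ?_
    · intro h hh f
      have hh' := inv_mem hh
      rw [mem_fixingSubgroup_iff] at hh'
      have e : ∀ i, h⁻¹ (c i) = c i := fun i => hh' _ ⟨i, rfl⟩
      refine (qρ_qe _ _ h f c).trans ?_
      simp only [e]
      rfl
    · intro f hH hl
      exact qρ_h2 c f hH hl
    · intro f hg
      apply q_ext
      intro s hs
      obtain ⟨g, hgc⟩ := exists_perm c s hc hs
      have h0 := (qρ_qe _ _ g⁻¹ f c).symm.trans (hg g⁻¹)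
      simpa only [inv_inv, hgc] using h0
end

section
/- Let p be a prime, V a finite-dimensional vector space over the field F_p with p elements, and G a subgroup of GL(V) such that: V is an irreducible F_pG-module (V ≠ 0 and the only G-invariant subspaces of V are 0 and V); p divides |G|; every G-orbit on V has size coprime to p (G is p-exceptional); and G has no proper normal subgroup of index coprime to p (G = O^{p'}(G)). Suppose V = V_1 ⊕ ⋯ ⊕ V_n with n > 1 is a direct sum decomposition into nonzero subspaces that G permutes (an imprimitivity decomposition). Then the stabilizer G_{V_1} of V_1 acts transitively on V_1 \ {0}, and the permutation group induced by G on Ω = {V_1, …, V_n} is primitive, has order divisible by p, and all of its orbits on the power set of Ω have size coprime to p (i.e. it is a primitive p-concealed subgroup of Sym(Ω)). -/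
open Pointwise MulAction

/-- An action of `G` on `X` is primitive if it is transitive and its only blocks are
the trivial ones (the subsingletons and the whole set). -/
def IsPrimitiveAction (G X : Type*) [Group G] [MulAction G X] : Prop :=
  MulAction.IsPretransitive G X ∧
    ∀ B : Set X, MulAction.IsBlock G B → MulAction.IsTrivialBlock B

/-- Key lemma: a nontrivial action of a group with no proper normal subgroup of `p'`-index. -/
theorem keyK (p : ℕ) [Fact p.Prime] (G : Type*) [Group G] [Finite G] (ι : Type*) [Finite ι]
    [MulAction G ι]
    (hOp' : ∀ N : Subgroup G, N.Normal → N.index.Coprime p → N = ⊤)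
    (hnt : ∃ (g : G) (i : ι), g • i ≠ i) :
    p ∣ Nat.card (MulAction.toPermHom G ι).range ∧
    ∃ (S : Set ι) (t : ι), t ∈ S ∧ ∀ D : Subgroup G, (∀ d ∈ D, ∀ i ∈ S, d • i ∈ S) →
      (∀ d ∈ D, d • t = t) → p ∣ D.index := by
  have hp : p.Prime := Fact.out
  have h1 : p ∣ Nat.card (MulAction.toPermHom G ι).range := by
    by_contra hcon
    have hN := hOp' (MulAction.toPermHom G ι).ker inferInstance (by
      rw [Subgroup.index_ker]
      exact ((Nat.Prime.coprime_iff_not_dvd hp).2 hcon).symm)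
    obtain ⟨g, i, hgi⟩ := hnt
    apply hgi
    have : g ∈ (MulAction.toPermHom G ι).ker := by rw [hN]; trivial
    have h2 := congrArg (fun σ : Equiv.Perm ι => σ i) (MonoidHom.mem_ker.1 this)
    simpa using h2
  refine ⟨h1, ?_⟩
  obtain ⟨⟨σ, g, rfl⟩, hσ⟩ := exists_prime_orderOf_dvd_card' p h1
  have hord : orderOf (MulAction.toPermHom G ι g) = p := by
    rw [← hσ]; exact (Subgroup.orderOf_mk _ _).symm
  have hne : MulAction.toPermHom G ι g ≠ 1 := by
    intro h
    rw [h, orderOf_one] at hord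
    exact hp.one_lt.ne hord
  obtain ⟨t, ht⟩ : ∃ t : ι, g • t ≠ t := by
    by_contra! hcon
    exact hne (Equiv.ext fun i => by simpa using hcon i)
  have hgp : ∀ i : ι, (g ^ p) • i = i := by
    intro i
    have h2 : (MulAction.toPermHom G ι g) ^ p = 1 := by rw [← hord]; exact pow_orderOf_eq_one _
    rw [← map_pow] at h2
    simpa using congrArg (fun σ : Equiv.Perm ι => σ i) h2
  let S : Set ι := MulAction.orbit (Subgroup.zpowers g) t
  have hSp : p ∣ Nat.card S := by
    have h3 : Function.minimalPeriod (g • ·) t = p := by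
      have h4 : Function.minimalPeriod (g • ·) t ∣ p := by
        apply Function.IsPeriodicPt.minimalPeriod_dvd
        show ((g • ·) : ι → ι)^[p] t = t
        rw [smul_iterate]; exact hgp t
      rcases (Nat.dvd_prime hp).1 h4 with h5 | h5
      · exact absurd (Function.minimalPeriod_eq_one_iff_isFixedPt.1 h5) ht
      · exact h5
    have : Nat.card S = p := by
      rw [← h3]
      haveI := Fintype.ofFinite S
      rw [Nat.card_eq_fintype_card]
      exact (MulAction.minimalPeriod_eq_card (a := g) (b := t)).symm
    rw [this]
  have htS : t ∈ S := MulAction.mem_orbit_self t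
  refine ⟨S, t, htS, ?_⟩
  intro D hD1 hD2
  let B : Subgroup G := MulAction.stabilizer G S
  let A : Subgroup G := MulAction.stabilizer G t
  have hDB : D ≤ B := by
    intro d hd
    show d • S = S
    apply Set.Subset.antisymm
    · rintro _ ⟨i, hi, rfl⟩; exact hD1 d hd i hi
    · intro i hi
      exact ⟨d⁻¹ • i, hD1 _ (D.inv_mem hd) i hi, smul_inv_smul d i⟩
  have hDA : D ≤ A := fun d hd => hD2 d hd
  have hgB : g ∈ B := by
    show g • S = S
    exact MulAction.smul_orbit (⟨g, Subgroup.mem_zpowers g⟩ : Subgroup.zpowers g) t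
  have horb : MulAction.orbit B t = S := by
    apply Set.Subset.antisymm
    · rintro _ ⟨⟨b, hb⟩, rfl⟩
      have hb' : b • S = S := hb
      show b • t ∈ S
      rw [← hb']
      exact Set.smul_mem_smul_set htS
    · rintro _ ⟨⟨b, hb⟩, rfl⟩
      exact ⟨⟨b, (Subgroup.zpowers_le.2 hgB) hb⟩, rfl⟩
  have hrel : A.relIndex B = Nat.card S := by
    rw [← horb]
    have : A.subgroupOf B = MulAction.stabilizer B t := by
      ext b; rfl
    rw [Subgroup.relIndex, this, MulAction.index_stabilizer, Nat.card_coe_set_eq]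
  have h6 : (A ⊓ B).index ∣ D.index := Subgroup.index_dvd_of_le (le_inf hDA hDB)
  have h7 : (A ⊓ B).relIndex B * B.index = (A ⊓ B).index :=
    Subgroup.relIndex_mul_index inf_le_right
  rw [Subgroup.inf_relIndex_right, hrel] at h7
  exact (hSp.trans (Dvd.intro _ h7)).trans h6

theorem primK (p : ℕ) [Fact p.Prime] (G : Type*) [Group G] [Finite G] (Ω : Type*) [Finite Ω]
    [MulAction G Ω] [MulAction.IsPretransitive G Ω]
    (hOp' : ∀ N : Subgroup G, N.Normal → N.index.Coprime p → N = ⊤)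
    (hcon : ∀ s : Set Ω, (Nat.card (MulAction.orbit G s)).Coprime p)
    (B : Set Ω) (hB : MulAction.IsBlock G B) : MulAction.IsTrivialBlock B := by
  have hp : p.Prime := Fact.out
  by_contra htr
  rw [MulAction.IsTrivialBlock, not_or, Set.not_subsingleton_iff] at htr
  obtain ⟨⟨a, ha, b, hb, hab⟩, hu⟩ := htr
  obtain ⟨c, hc⟩ := (Set.ne_univ_iff_exists_notMem B).1 hu
  have heq : ∀ C D : MulAction.orbit G B, ∀ x : Ω, x ∈ C.1 → x ∈ D.1 → C = D := by
    rintro ⟨_, g, rfl⟩ ⟨_, h, rfl⟩ x hx hy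
    apply Subtype.ext
    by_contra hne
    exact Set.disjoint_left.1 (hB hne) hx hy
  obtain ⟨-, S, t, htS, hK⟩ := keyK p G (MulAction.orbit G B) hOp' (by
    obtain ⟨g, hg⟩ := MulAction.exists_smul_eq G a c
    refine ⟨g, ⟨B, MulAction.mem_orbit_self B⟩, fun h => hc ?_⟩
    have h2 : g • B = B := congrArg Subtype.val h
    rw [← h2, ← hg]
    exact Set.smul_mem_smul_set ha)
  obtain ⟨g, hg⟩ := t.2
  have hg' : g • B = t.1 := hg
  have hat : g • a ∈ t.1 := by rw [← hg']; exact Set.smul_mem_smul_set ha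
  have hbt : g • b ∈ t.1 := by rw [← hg']; exact Set.smul_mem_smul_set hb
  let T : Set Ω := {x | x = g • a ∨ ∃ C ∈ S, C ≠ t ∧ x ∈ C.1}
  have hTS : ∀ x ∈ T, ∃ C ∈ S, x ∈ C.1 := by
    rintro x (rfl | ⟨C, hC, -, hx⟩)
    · exact ⟨t, htS, hat⟩
    · exact ⟨C, hC, hx⟩
  have hST : ∀ C ∈ S, ∃ x ∈ T, x ∈ C.1 := by
    intro C hC
    by_cases h : C = t
    · subst h; exact ⟨g • a, Or.inl rfl, hat⟩
    · obtain ⟨k, hk⟩ := C.2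
      have : k • a ∈ C.1 := by rw [← hk]; exact Set.smul_mem_smul_set ha
      exact ⟨k • a, Or.inr ⟨C, hC, h, this⟩, this⟩
  have hDT : ∀ d ∈ MulAction.stabilizer G T, ∀ x ∈ T, d • x ∈ T := by
    intro d hd x hx
    have : d • T = T := hd
    rw [← this]; exact Set.smul_mem_smul_set hx
  have hDS : ∀ d ∈ MulAction.stabilizer G T, ∀ C ∈ S, d • C ∈ S := by
    intro d hd C hC
    obtain ⟨x, hx, hxC⟩ := hST C hC
    obtain ⟨C', hC', hx'⟩ := hTS _ (hDT d hd x hx)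
    have : d • C = C' := heq _ _ (d • x) (Set.smul_mem_smul_set hxC) hx'
    rw [this]; exact hC'
  have := hK (MulAction.stabilizer G T) hDS (by
    intro d hd
    by_contra hne
    have h1 : d • (g • b) ∈ T :=
      Or.inr ⟨d • t, hDS d hd t htS, hne, Set.smul_mem_smul_set hbt⟩
    have h2 := hDT _ ((MulAction.stabilizer G T).inv_mem hd) _ h1
    rw [inv_smul_smul] at h2
    rcases h2 with h2 | ⟨C, -, hCt, h2⟩
    · exact hab (MulAction.injective g h2).symm
    · exact hCt (heq _ _ _ h2 hbt))
  rw [MulAction.index_stabilizer, ← Nat.card_coe_set_eq] at this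
  exact (Nat.Prime.coprime_iff_not_dvd hp).1 (hcon T).symm this

theorem uniqU {R V : Type*} [Ring R] [AddCommGroup V] [Module R V] {m : ℕ}
    (Vsub : Fin m → Submodule R V) (hind : iSupIndep Vsub)
    (u w : Fin m → V) (hu : ∀ i, u i ∈ Vsub i) (hw : ∀ i, w i ∈ Vsub i)
    (h : ∑ i, u i = ∑ i, w i) (i : Fin m) : u i = w i := by
  have h1 : ∑ i, (u i - w i) = 0 := by rw [Finset.sum_sub_distrib, h, sub_self]
  rw [← Finset.add_sum_erase _ _ (Finset.mem_univ i)] at h1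
  have h2 : u i - w i ∈ ⨆ j, ⨆ (_ : j ≠ i), Vsub j := by
    rw [eq_neg_of_add_eq_zero_left h1]
    refine Submodule.neg_mem _ (Submodule.sum_mem _ fun j hj => ?_)
    exact Submodule.mem_iSup_of_mem j (Submodule.mem_iSup_of_mem (Finset.ne_of_mem_erase hj)
      (Submodule.sub_mem _ (hu j) (hw j)))
  exact sub_eq_zero.1 (Submodule.disjoint_def.1 (hind i) _
    (Submodule.sub_mem _ (hu i) (hw i)) h2)

/-- Theorem 2.3 of the paper (Theorem 3 of Giudici–Liebeck–Praeger–Saxl–Tiep).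
Let `G ≤ GL(V)`, `V` a finite-dimensional vector space over `𝔽_p`, be irreducible and
`p`-exceptional with `G = O^{p'}(G)`, and let `V = V₁ ⊕ ⋯ ⊕ V_m` (`m > 1`) be an
imprimitivity decomposition for `G`. Then the stabilizer of `V₁` is transitive on
`V₁ \ {0}`, and the permutation group `Q` induced by `G` on `{V₁, …, V_m}` is
primitive and `p`-concealed. -/
theorem glpst_theorem3 (p : ℕ) [Fact p.Prime]
    (V : Type*) [AddCommGroup V] [Module (ZMod p) V] [FiniteDimensional (ZMod p) V]
    (G : Subgroup ((V →ₗ[ZMod p] V)ˣ))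
    (hV : Nontrivial V)
    (hirr : ∀ W : Submodule (ZMod p) V,
      (∀ g ∈ G, ∀ w ∈ W, (g : V →ₗ[ZMod p] V) w ∈ W) → W = ⊥ ∨ W = ⊤)
    (hdvd : p ∣ Nat.card G)
    (hexc : ∀ v : V, (Nat.card {w : V | ∃ g ∈ G, (g : V →ₗ[ZMod p] V) v = w}).Coprime p)
    (hOp' : ∀ N : Subgroup ↥G, N.Normal → N.index.Coprime p → N = ⊤)
    (m : ℕ) (hm : 1 < m) (Vsub : Fin m → Submodule (ZMod p) V)
    (hne : ∀ i, Vsub i ≠ ⊥)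
    (hind : iSupIndep Vsub) (hspan : ⨆ i, Vsub i = ⊤)
    (hperm : ∀ g ∈ G, ∀ i, ∃ j, (Vsub i).map (g : V →ₗ[ZMod p] V) = Vsub j) :
    -- the stabilizer of `V₁` (of each `Vᵢ`) is transitive on the nonzero vectors
    (∀ i : Fin m, ∀ v ∈ Vsub i, v ≠ 0 → ∀ w ∈ Vsub i, w ≠ 0 →
      ∃ g ∈ G, (Vsub i).map (g : V →ₗ[ZMod p] V) = Vsub i ∧
        (g : V →ₗ[ZMod p] V) v = w) ∧
    -- the induced permutation group on `Ω = {V₁, …, V_m}` is primitive and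
    -- `p`-concealed
    ∃ Q : Subgroup (Equiv.Perm (Fin m)),
      (∀ σ : Equiv.Perm (Fin m), σ ∈ Q ↔
        ∃ g ∈ G, ∀ i, (Vsub i).map (g : V →ₗ[ZMod p] V) = Vsub (σ i)) ∧
      p ∣ Nat.card Q ∧
      IsPrimitiveAction Q (Fin m) ∧
      ∀ s : Set (Fin m), (Nat.card (MulAction.orbit Q s)).Coprime p := by
  classical
  have hp : p.Prime := Fact.out
  haveI : Finite V := Module.finite_of_finite (ZMod p)
  haveI : Finite (V →ₗ[ZMod p] V) := Finite.of_injective _ DFunLike.coe_injective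
  haveI : Finite ((V →ₗ[ZMod p] V)ˣ) := Finite.of_injective _ Units.val_injective
  have hinj : Function.Injective Vsub := hind.injective hne
  choose f hf using fun g : G => hperm g.1 g.2
  letI act : MulAction G (Fin m) :=
    { smul := fun g i => f g i
      one_smul := fun i => hinj (by
        show Vsub (f 1 i) = _
        rw [← hf]; exact Submodule.map_id _)
      mul_smul := fun g h i => hinj (by
        show Vsub (f (g * h) i) = Vsub (f g (f h i))
        rw [← hf, ← hf, ← hf]; exact Submodule.map_comp _ _ _) }
  have hmap : ∀ (g : G) i, (Vsub i).map (g.1 : V →ₗ[ZMod p] V) = Vsub (g • i) := hf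
  have hmem : ∀ (g : G) i, ∀ v ∈ Vsub i, g • v ∈ Vsub (g • i) := by
    intro g i v hv
    rw [← hmap]; exact Submodule.mem_map_of_mem hv
  have hex : ∀ v : V, ¬ p ∣ (MulAction.stabilizer G v).index := by
    intro v
    rw [MulAction.index_stabilizer, ← Nat.card_coe_set_eq, ← Nat.Prime.coprime_iff_not_dvd hp]
    have : MulAction.orbit G v = {w : V | ∃ g ∈ G, (g : V →ₗ[ZMod p] V) v = w} := by
      ext w
      constructor
      · rintro ⟨g, rfl⟩; exact ⟨g.1, g.2, rfl⟩
      · rintro ⟨g, hg, rfl⟩; exact ⟨⟨g, hg⟩, rfl⟩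
    rw [this]; exact (hexc v).symm
  -- transitivity on the summands
  have htrans : MulAction.IsPretransitive G (Fin m) := by
    refine ⟨fun i j => ?_⟩
    by_contra hij
    let W : Submodule (ZMod p) V := ⨆ g : G, Vsub (g • i)
    have hi : Vsub i ≤ W := by
      have := le_iSup (fun g : G => Vsub (g • i)) 1
      simpa using this
    have hW := hirr W (by
      intro g hg w hw
      have h1 : W ≤ W.comap (g : V →ₗ[ZMod p] V) := by
        refine iSup_le fun h => ?_
        rw [← Submodule.map_le_iff_le_comap]
        have h2 := hmap ⟨g, hg⟩ (h • i)
        rw [← mul_smul] at h2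
        exact h2.le.trans (le_iSup (fun k : G => Vsub (k • i)) (⟨g, hg⟩ * h))
      exact h1 hw)
    rcases hW with hW | hW
    · exact hne i (le_bot_iff.1 (hW ▸ hi))
    · have h1 : W ≤ ⨆ k, ⨆ (_ : k ≠ j), Vsub k :=
        iSup_le fun g => le_iSup₂_of_le (g • i) (fun h => hij ⟨g, h⟩) le_rfl
      rw [hW, top_le_iff] at h1
      have h2 := hind j
      rw [h1, disjoint_top] at h2
      exact hne j h2
  -- stabilizers of vectors permute components
  have hcomp : ∀ u : Fin m → V, (∀ i, u i ∈ Vsub i) →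
      ∀ d ∈ MulAction.stabilizer G (∑ i, u i), ∀ i, d • u i = u (d • i) := by
    intro u hu d hd i
    have hd' : d • (∑ i, u i) = ∑ i, u i := hd
    have h1 : ∑ j, d • u (d⁻¹ • j) = ∑ j, u j := by
      conv_rhs => rw [← hd', Finset.smul_sum]
      exact Equiv.sum_comp (MulAction.toPerm (d⁻¹ : G)) (fun j => d • u j)
    have h2 := uniqU Vsub hind (fun j => d • u (d⁻¹ • j)) u
      (fun j => by simpa using hmem d _ _ (hu (d⁻¹ • j))) hu h1 (d • i)
    simpa using h2
  have hnt : ∃ (g : G) (i : Fin m), g • i ≠ i := by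
    obtain ⟨g, hg⟩ := MulAction.exists_smul_eq G (⟨0, by omega⟩ : Fin m) ⟨1, hm⟩
    refine ⟨g, ⟨0, by omega⟩, ?_⟩
    rw [hg]; simp
  obtain ⟨hQp, S, t, htS, hK⟩ := keyK p G (Fin m) hOp' hnt
  have hg0 : ∀ (g : G) (v : V), v ≠ 0 → g • v ≠ 0 := fun g v hv h =>
    hv ((smul_eq_zero_iff_eq g).1 h)
  refine ⟨?_, (MulAction.toPermHom G (Fin m)).range, ?_, hQp, ?_⟩
  · intro i x hx hx0 y hy hy0
    by_contra hcon
    have hno : ∀ g : G, g • x ≠ y := by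
      intro g hgx
      refine hcon ⟨g.1, g.2, ?_, hgx⟩
      rw [hmap]
      by_contra hne'
      have hgi : g • i ≠ i := fun h => hne' (by rw [h])
      have h1 : y ∈ Vsub (g • i) := hgx ▸ hmem g i x hx
      exact hy0 (Submodule.disjoint_def.1 (hind.pairwiseDisjoint hgi) y h1 hy)
    choose k hk using fun j => MulAction.exists_smul_eq G i j
    let u : Fin m → V := fun j => if j = t then k j • x else if j ∈ S then k j • y else 0
    have hu : ∀ j, u j ∈ Vsub j := by
      intro j
      have h1 := hmem (k j) i x hx
      have h2 := hmem (k j) i y hy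
      rw [hk] at h1 h2
      simp only [u]
      split_ifs
      · exact h1
      · exact h2
      · exact Submodule.zero_mem _
    have huS : ∀ j, u j ≠ 0 ↔ j ∈ S := by
      intro j
      simp only [u]
      split_ifs with h1 h2
      · subst h1; exact ⟨fun _ => htS, fun _ => hg0 _ _ hx0⟩
      · exact ⟨fun _ => h2, fun _ => hg0 _ _ hy0⟩
      · exact ⟨fun h => absurd rfl h, fun h => absurd h h2⟩
    have hDS : ∀ d ∈ MulAction.stabilizer G (∑ i, u i), ∀ j ∈ S, d • j ∈ S := by
      intro d hd j hj
      rw [← huS, ← hcomp u hu d hd]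
      exact hg0 _ _ ((huS j).2 hj)
    refine hex (∑ i, u i) (hK _ hDS ?_)
    intro d hd
    by_contra hdt
    have h1 := hcomp u hu d hd t
    have h2 := hDS d hd t htS
    simp only [u, if_true, if_neg hdt, if_pos h2] at h1
    apply hno ((k (d • t))⁻¹ * (d * k t))
    rw [mul_smul, mul_smul, h1, inv_smul_smul]
  · intro σ
    constructor
    · rintro ⟨g, rfl⟩
      exact ⟨g.1, g.2, fun i => hmap g i⟩
    · rintro ⟨g, hg, h⟩
      refine ⟨⟨g, hg⟩, Equiv.ext fun i => hinj ?_⟩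
      rw [← h i]; exact (hmap ⟨g, hg⟩ i).symm
  · let φ := (MulAction.toPermHom G (Fin m)).rangeRestrict
    have hφ : Function.Surjective φ := MonoidHom.rangeRestrict_surjective _
    have hconc : ∀ s : Set (Fin m),
        (Nat.card (MulAction.orbit (MulAction.toPermHom G (Fin m)).range s)).Coprime p := by
      intro s
      choose x hx hx0 using fun i => Submodule.exists_mem_ne_zero_of_ne_bot (hne i)
      let u : Fin m → V := fun j => if j ∈ s then x j else 0
      have hu : ∀ j, u j ∈ Vsub j := by
        intro j
        simp only [u]
        split_ifs
        · exact hx j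
        · exact Submodule.zero_mem _
      have hus : ∀ j, u j ≠ 0 ↔ j ∈ s := by
        intro j
        simp only [u]
        split_ifs with h
        · exact ⟨fun _ => h, fun _ => hx0 j⟩
        · exact ⟨fun h' => absurd rfl h', fun h' => absurd h' h⟩
      have hds : ∀ d ∈ MulAction.stabilizer G (∑ i, u i), ∀ j ∈ s, d • j ∈ s := by
        intro d hd j hj
        rw [← hus, ← hcomp u hu d hd]
        exact hg0 _ _ ((hus j).2 hj)
      have hle : MulAction.stabilizer G (∑ i, u i) ≤
          (MulAction.stabilizer (MulAction.toPermHom G (Fin m)).range s).comap φ := by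
        intro d hd
        show φ d • s = s
        apply Set.Subset.antisymm
        · rintro _ ⟨j, hj, rfl⟩; exact hds d hd j hj
        · intro j hj
          exact ⟨d⁻¹ • j, hds _ (Subgroup.inv_mem _ hd) j hj, smul_inv_smul d j⟩
      have h1 := Subgroup.index_dvd_of_le hle
      rw [Subgroup.index_comap_of_surjective _ hφ, MulAction.index_stabilizer,
        ← Nat.card_coe_set_eq] at h1
      exact ((Nat.Prime.coprime_iff_not_dvd hp).2 fun h => hex _ (h.trans h1)).symm
    have htr : MulAction.IsPretransitive (MulAction.toPermHom G (Fin m)).range (Fin m) :=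
      ⟨fun i j => by
        obtain ⟨g, hg⟩ := MulAction.exists_smul_eq G i j
        exact ⟨φ g, hg⟩⟩
    refine ⟨⟨htr, fun B hB => ?_⟩, hconc⟩
    refine primK p _ (Fin m) ?_ hconc B hB
    intro N hN hNi
    have h1 := hOp' (N.comap φ) (hN.comap φ)
      (by rw [Subgroup.index_comap_of_surjective _ hφ]; exact hNi)
    rw [eq_top_iff]
    intro q _
    obtain ⟨g, rfl⟩ := hφ q
    have : g ∈ N.comap φ := by rw [h1]; trivial
    exact this
end

section
/- Let p be a prime, V a finite perfect group, and N a normal abelian p-subgroup of V. Let λ : N → ℂ^× be a group homomorphism that is V-invariant, i.e. λ(v n v^{-1}) = λ(n) for all v ∈ V and n ∈ N, and suppose λ extends to a group homomorphism R → ℂ^× for some Sylow p-subgroup R of V. Then λ is the trivial homomorphism. -/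
/-- Step 7 of the proof of the main theorem: if `V` is a finite perfect group, `N` a
normal abelian `p`-subgroup of `V`, and `λ : N → ℂˣ` a `V`-invariant linear character
of `N` that extends to some Sylow `p`-subgroup of `V`, then `λ` is trivial. -/
theorem invariant_linear_character_trivial (p : ℕ) (hp : p.Prime)
    (V : Type*) [Group V] [Finite V] (hperf : commutator V = ⊤)
    (N : Subgroup V) (hN : N.Normal) (hNab : ∀ a b : N, a * b = b * a)
    (hNp : IsPGroup p N) (lam : N →* ℂˣ)
    (hinv : ∀ (v : V) (n : N), lam ⟨v * n * v⁻¹, hN.conj_mem n n.2 v⟩ = lam n)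
    (hext : ∃ (R : Sylow p V) (hNR : N ≤ (R : Subgroup V)) (mu : (R : Subgroup V) →* ℂˣ),
      ∀ n : N, mu ⟨n, hNR n.2⟩ = lam n) :
    lam = 1 := by
  obtain ⟨R, hNR, mu, hmu⟩ := hext
  haveI : Fact p.Prime := ⟨hp⟩
  ext1 n
  have hker : (MonoidHom.transfer mu) (n : V) = 1 := by
    have h1 := Abelianization.commutator_subset_ker (MonoidHom.transfer mu)
    rw [hperf] at h1
    exact h1 (Subgroup.mem_top _)
  have hfix : ∀ q : V ⧸ (R : Subgroup V), (n : V)⁻¹ • q = q := by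
    intro q
    induction q using QuotientGroup.induction_on with
    | H v =>
      rw [MulAction.Quotient.smul_coe, QuotientGroup.eq, smul_eq_mul]
      apply hNR
      have := hN.conj_mem n n.2 v⁻¹
      simpa [mul_assoc] using this
  have hpow : lam n ^ (R : Subgroup V).index = 1 := by
    rw [MonoidHom.transfer_def mu default, Subgroup.leftTransversals.diff] at hker
    letI := (R : Subgroup V).fintypeQuotientOfFiniteIndex
    rw [← hker, Subgroup.index_eq_card, Nat.card_eq_fintype_card, ← Finset.card_univ,
      ← Finset.prod_const]
    refine Finset.prod_congr rfl fun q _ => ?_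
    set t : V := ((default : (R : Subgroup V).LeftTransversal).2.leftQuotientEquiv q : V) with ht
    rw [← hinv t⁻¹ n, ← hmu]
    congr 1
    ext
    change t⁻¹ * n * t⁻¹⁻¹ = t⁻¹ * _
    rw [Subgroup.smul_apply_eq_smul_apply_inv_smul, hfix, inv_inv, mul_assoc]
    rfl
  obtain ⟨k, hk⟩ := hNp n
  have hpk : lam n ^ p ^ k = 1 := by rw [← map_pow, hk, map_one]
  have hco : Nat.Coprime (p ^ k) (R : Subgroup V).index :=
    Nat.Coprime.pow_left k ((Nat.Prime.coprime_iff_not_dvd hp).2 R.not_dvd_index)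
  have hd := Nat.dvd_gcd (orderOf_dvd_of_pow_eq_one hpk) (orderOf_dvd_of_pow_eq_one hpow)
  rw [hco] at hd
  exact orderOf_eq_one_iff.1 (Nat.dvd_one.1 hd)
end
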